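/- Tail behaviour of negative powers of the absolute value of a Gaussian: Let G be a standard Gaussian random variable and let r > 0. Then lim_{x→∞} x^{1/r} · P( |G|^{−r} > x ) = √(2/π). Consequently the tail of |G|^{−r} is regularly varying with index −1/r. -/

import Mathlib

open MeasureTheory ProbabilityTheory Filter

noncomputable section

/-!
For `r > 0` and `x > 0` the event `|X| ^ (-r) > x` is `0 < |X| < a` with `a = x ^ (-1 / r)`, so the
tail at infinity is governed by the mass that the law of `X` gives to small punctured intervals
around `0`. If that law has a density `f` continuous at `0`, this mass is `2 a f(0) + o(a)`; for the
standard Gaussian, `2 f(0) = 2 / √(2π) = √(2 / π)`. A function asymptotic to `C x ^ (-α)` with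
`C ≠ 0` is regularly varying with index `-α`.
-/

open Topology

/-- Regular variation at infinity with index `ρ`, in the sense of Karamata: `f (c x) / f x → c ^ ρ`
for each `c > 0`. Measurability and eventual positivity of `f` are not part of this definition. -/
def IsRegularlyVarying (f : ℝ → ℝ) (ρ : ℝ) : Prop :=
  ∀ c : ℝ, 0 < c → Tendsto (fun x ↦ f (c * x) / f x) atTop (𝓝 (c ^ ρ))

theorem isRegularlyVarying_neg_of_tendsto_rpow_mul {f : ℝ → ℝ} {α L : ℝ} (hL : L ≠ 0)
    (hf : Tendsto (fun x ↦ x ^ α * f x) atTop (𝓝 L)) : IsRegularlyVarying f (-α) := by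
  intro c hc
  have hscaled : Tendsto (fun x ↦ (c * x) ^ α * f (c * x)) atTop (𝓝 L) :=
    hf.comp (tendsto_id.const_mul_atTop hc)
  have hratio := (hscaled.div hf hL).const_mul (c ^ (-α))
  rw [div_self hL, mul_one] at hratio
  refine hratio.congr' ?_
  filter_upwards [eventually_gt_atTop 0] with x hx
  have hcα : c ^ α ≠ 0 := (Real.rpow_pos_of_pos hc α).ne'
  have hxα : x ^ α ≠ 0 := (Real.rpow_pos_of_pos hx α).ne'
  calc c ^ (-α) * ((c * x) ^ α * f (c * x) / (x ^ α * f x))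
      = (c ^ α)⁻¹ * (c ^ α * (x ^ α * f (c * x) / (x ^ α * f x))) := by
        rw [Real.rpow_neg hc.le, Real.mul_rpow hc.le hx.le, mul_assoc, mul_div_assoc]
    _ = f (c * x) / f x := by
        rw [inv_mul_cancel_left₀ hcα, mul_div_mul_left _ _ hxα]

-- The condition `0 < |y|` is there because of the convention `0 ^ (-r) = 0`.
theorem lt_abs_rpow_neg_iff {r x y : ℝ} (hr : 0 < r) (hx : 0 < x) :
    x < |y| ^ (-r) ↔ 0 < |y| ∧ |y| < x ^ (-(1 / r)) := by
  rcases (abs_nonneg y).eq_or_lt with hy | hy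
  · simp [← hy, Real.zero_rpow (neg_ne_zero.mpr hr.ne'), hx.le]
  · have hinv : (-(1 / r))⁻¹ = -r := by rw [inv_neg, one_div, inv_inv]
    rw [← hinv, Real.lt_rpow_inv_iff_of_neg hx hy (neg_neg_of_pos (one_div_pos.mpr hr))]
    exact (and_iff_right hy).symm

theorem tendsto_rpow_neg_atTop_nhdsGT_zero {s : ℝ} (hs : 0 < s) :
    Tendsto (fun x : ℝ ↦ x ^ (-s)) atTop (𝓝[>] 0) :=
  tendsto_nhdsWithin_iff.mpr ⟨tendsto_rpow_neg_atTop hs,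
    (eventually_gt_atTop 0).mono fun _ hx ↦ Real.rpow_pos_of_pos hx _⟩

theorem tendsto_rpow_mul_measureReal_lt_abs_rpow_neg {Ω : Type*} [MeasurableSpace Ω]
    {P : Measure Ω} {X : Ω → ℝ} {r L : ℝ} (hr : 0 < r)
    (hX : Tendsto (fun a ↦ P.real {ω | 0 < |X ω| ∧ |X ω| < a} / a) (𝓝[>] 0) (𝓝 L)) :
    Tendsto (fun x ↦ x ^ (1 / r) * P.real {ω | x < |X ω| ^ (-r)}) atTop (𝓝 L) := by
  refine (hX.comp (tendsto_rpow_neg_atTop_nhdsGT_zero (one_div_pos.mpr hr))).congr' ?_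
  filter_upwards [eventually_gt_atTop 0] with x hx
  simp only [Function.comp_apply, lt_abs_rpow_neg_iff hr hx]
  rw [Real.rpow_neg hx.le, div_inv_eq_mul, mul_comm]

section Density

variable {α : Type*} [MeasurableSpace α] {μ : Measure α} {f : α → ℝ}

theorem measureReal_withDensity_ofReal (hf : AEMeasurable f μ) (hf_nonneg : 0 ≤ᵐ[μ] f)
    {s : Set α} (hs : MeasurableSet s) :
    (μ.withDensity fun x ↦ ENNReal.ofReal (f x)).real s = ∫ x in s, f x ∂μ := by
  rw [measureReal_def, withDensity_apply _ hs,
    integral_eq_lintegral_of_nonneg_ae (ae_restrict_of_ae hf_nonneg)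
      hf.aestronglyMeasurable.restrict]

theorem tendsto_measureReal_withDensity_div [TopologicalSpace α] [OpensMeasurableSpace α]
    [IsLocallyFiniteMeasure μ] (hf : AEMeasurable f μ) (hf_nonneg : 0 ≤ᵐ[μ] f) {x : α}
    (hfx : ContinuousAt f x) {ι : Type*} {l : Filter ι} {s : ι → Set α}
    (hs : Tendsto s l (𝓝 x).smallSets) (hs_meas : ∀ i, MeasurableSet (s i))
    (hs_ne : ∀ᶠ i in l, μ.real (s i) ≠ 0) :
    Tendsto (fun i ↦ (μ.withDensity fun y ↦ ENNReal.ofReal (f y)).real (s i) / μ.real (s i)) l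
      (𝓝 (f x)) := by
  have herror := (hfx.integral_sub_linear_isLittleO_ae
    hf.aestronglyMeasurable.stronglyMeasurableAtFilter hs).tendsto_div_nhds_zero
  have hlim := herror.add_const (f x)
  rw [zero_add] at hlim
  refine hlim.congr' ?_
  filter_upwards [hs_ne] with i hi
  rw [measureReal_withDensity_ofReal hf hf_nonneg (hs_meas i), smul_eq_mul, sub_div,
    mul_div_cancel_left₀ _ hi, sub_add_cancel]

end Density

theorem setOf_abs_pos_and_abs_lt (a : ℝ) :
    {t : ℝ | 0 < |t| ∧ |t| < a} = Metric.ball 0 a \ {0} := by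
  ext t
  simp [and_comm]

theorem volume_real_ball_sdiff_singleton (x : ℝ) {a : ℝ} (ha : 0 ≤ a) :
    volume.real (Metric.ball x a \ {x}) = 2 * a := by
  rw [measureReal_def, measure_sdiff_null Real.volume_singleton, Real.volume_ball,
    ENNReal.toReal_ofReal (by positivity)]

theorem tendsto_ball_sdiff_singleton_smallSets {α : Type*} [PseudoMetricSpace α] (x : α) :
    Tendsto (fun a ↦ Metric.ball x a \ {x}) (𝓝[>] 0) (𝓝 x).smallSets :=
  ((tendsto_closedBall_smallSets x).mono_left nhdsWithin_le_nhds).smallSets_mono <|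
    .of_forall fun _ ↦ Set.sdiff_subset.trans Metric.ball_subset_closedBall

theorem tendsto_measureReal_abs_pos_abs_lt_div {Ω : Type*} [MeasurableSpace Ω] {P : Measure Ω}
    {X : Ω → ℝ} {f : ℝ → ℝ} (hf : AEMeasurable f) (hf_nonneg : 0 ≤ᵐ[volume] f)
    (hf_cont : ContinuousAt f 0)
    (hX : HasLaw X (volume.withDensity fun t ↦ ENNReal.ofReal (f t)) P) :
    Tendsto (fun a ↦ P.real {ω | 0 < |X ω| ∧ |X ω| < a} / a) (𝓝[>] 0) (𝓝 (2 * f 0)) := by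
  have hmeas (a : ℝ) : MeasurableSet (Metric.ball (0 : ℝ) a \ {0}) :=
    Metric.isOpen_ball.measurableSet.diff (measurableSet_singleton 0)
  have hvol : ∀ᶠ a : ℝ in 𝓝[>] 0, volume.real (Metric.ball (0 : ℝ) a \ {0}) = 2 * a :=
    eventually_mem_nhdsWithin.mono fun a ha ↦ volume_real_ball_sdiff_singleton 0 (le_of_lt ha)
  have hvol_ne : ∀ᶠ a : ℝ in 𝓝[>] 0, volume.real (Metric.ball (0 : ℝ) a \ {0}) ≠ 0 := by
    filter_upwards [hvol, self_mem_nhdsWithin] with a hva ha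
    exact hva ▸ (mul_pos two_pos ha).ne'
  refine ((tendsto_measureReal_withDensity_div hf hf_nonneg hf_cont
    (tendsto_ball_sdiff_singleton_smallSets 0) hmeas hvol_ne).const_mul 2).congr' ?_
  filter_upwards [hvol] with a hva
  rw [hX.measureReal_eq (p := fun t ↦ 0 < |t| ∧ |t| < a)
    (setOf_abs_pos_and_abs_lt a ▸ hmeas a), setOf_abs_pos_and_abs_lt, hva,
    ← mul_div_assoc, mul_div_mul_left _ _ two_ne_zero]

theorem continuous_gaussianPDFReal (m : ℝ) (v : NNReal) : Continuous (gaussianPDFReal m v) := by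
  rw [gaussianPDFReal_def]
  fun_prop

theorem gaussianPDFReal_self (m : ℝ) (v : NNReal) :
    gaussianPDFReal m v m = (√(2 * Real.pi * v))⁻¹ := by
  simp [gaussianPDFReal]

theorem two_mul_gaussianPDFReal_zero_one_zero : 2 * gaussianPDFReal 0 1 0 = √(2 / Real.pi) := by
  have hfour : 2 / Real.pi = 2 ^ 2 / (2 * Real.pi) := by
    field_simp
  rw [gaussianPDFReal_self, NNReal.coe_one, mul_one, hfour, Real.sqrt_div' _ (by positivity),
    Real.sqrt_sq two_pos.le, div_eq_mul_inv]

theorem tail_of_negative_power_of_gaussian_general {Ω : Type*} [MeasurableSpace Ω] {P : Measure Ω}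
    {X : Ω → ℝ} {f : ℝ → ℝ} (hf : AEMeasurable f) (hf_nonneg : 0 ≤ᵐ[volume] f)
    (hf_cont : ContinuousAt f 0) (hf_zero : f 0 ≠ 0)
    (hX : HasLaw X (volume.withDensity fun t ↦ ENNReal.ofReal (f t)) P) {r : ℝ} (hr : 0 < r) :
    Tendsto (fun x ↦ x ^ (1 / r) * P.real {ω | x < |X ω| ^ (-r)}) atTop (𝓝 (2 * f 0)) ∧
      IsRegularlyVarying (fun x ↦ P.real {ω | x < |X ω| ^ (-r)}) (-(1 / r)) := by
  have htail := tendsto_rpow_mul_measureReal_lt_abs_rpow_neg hr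
    (tendsto_measureReal_abs_pos_abs_lt_div hf hf_nonneg hf_cont hX)
  exact ⟨htail, isRegularlyVarying_neg_of_tendsto_rpow_mul (mul_ne_zero two_ne_zero hf_zero) htail⟩

/-- Tail behaviour of negative powers of the absolute value of a Gaussian: if `G` is
standard Gaussian and `r > 0`, then `x^{1/r} P(|G|^{-r} > x) → √(2/π)` as `x → ∞`;
consequently the tail of `|G|^{-r}` is regularly varying with index `-1/r`. -/
theorem tail_of_negative_power_of_gaussian
    {Ω : Type} [MeasurableSpace Ω] (P : Measure Ω) [IsProbabilityMeasure P]
    (G : Ω → ℝ) (hmeas : Measurable G)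
    (hlaw : Measure.map G P = gaussianReal 0 1)
    (r : ℝ) (hr : 0 < r) :
    Tendsto (fun x : ℝ =>
        x ^ (1 / r) * (P {ω | |G ω| ^ (-r) > x}).toReal) atTop
      (nhds (Real.sqrt (2 / Real.pi))) ∧
    ∀ c : ℝ, 0 < c →
      Tendsto (fun x : ℝ =>
          (P {ω | |G ω| ^ (-r) > c * x}).toReal / (P {ω | |G ω| ^ (-r) > x}).toReal)
        atTop (nhds (c ^ (-(1 / r)))) := by
  have hG : HasLaw G (volume.withDensity fun t ↦ ENNReal.ofReal (gaussianPDFReal 0 1 t)) P :=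
    ⟨hmeas.aemeasurable, hlaw.trans (gaussianReal_of_var_ne_zero 0 one_ne_zero)⟩
  rw [← two_mul_gaussianPDFReal_zero_one_zero]
  exact tail_of_negative_power_of_gaussian_general
    (measurable_gaussianPDFReal 0 1).aemeasurable (ae_of_all _ (gaussianPDFReal_nonneg 0 1))
    (continuous_gaussianPDFReal 0 1).continuousAt (gaussianPDFReal_pos 0 1 0 one_ne_zero).ne' hG hr
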